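/- Suppose the integers k ≥ 2, n ≥ 9 with n ≥ k + 1, ℓ ≥ 1, m ≥ 1 and digits d1, d2 ∈ {0,…,9} with d1 > 0, d1 ≠ d2 satisfy F_n^(k) = d1·((10^ℓ−1)/9)·10^{ℓ+m} + d2·((10^m−1)/9)·10^ℓ + d1·((10^ℓ−1)/9). Then |(9/d1)·10^{−(2ℓ+m)}·f_k(α)·α^{n−1} − 1| < 11·10^{−ℓ}, where α is the unique real root greater than 1 of Ψ_k(x) = x^k − x^{k−1} − ⋯ − x − 1 and f_k(x) = (x − 1)/(2 + (k + 1)(x − 2)). -/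

import Mathlib

/-!
Let `α > 1` be the dominant root of `Ψ_k`. Since `(x - 1) Ψ_k(x) = x^(k+1) - 2 x^k + 1`, division by
`x - α` gives `(x - 1) Ψ_k(x) = (x - α) (x^k - ∑ j < k, α^(-(j+1)) x^j)`. A solution of the
`k`-Fibonacci recurrence with no `α`-component is therefore annihilated by the second factor: each
of its terms is an average, with weights `α^(-(j+1))` of total mass `1`, of the preceding `k` terms.
So it never leaves an interval containing its first `k` terms. Applied to `F_n - f_k(α) α^(n-1)`,
whose first `k` terms lie in `[-1, 1]`, this gives `|F_n - f_k(α) α^(n-1)| ≤ 1`.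

In base `b`, the number with digit blocks `d₁ ⋯ d₁ d₂ ⋯ d₂ d₁ ⋯ d₁` differs from
`d₁ b^(2ℓ+m) / (b - 1)` by a relative error of at most `(b - 1) b^(-ℓ)`; replacing it by
`f_k(α) α^(n-1)` costs at most another `b^(-ℓ)`.
-/

theorem mem_of_convex_combination_recurrence {𝕜 E : Type*} [Field 𝕜] [LinearOrder 𝕜]
    [IsStrictOrderedRing 𝕜] [AddCommGroup E] [Module 𝕜 E] {s : Set E} (hs : Convex 𝕜 s)
    {k : ℕ} {w : ℕ → 𝕜} (hw : ∀ j < k, 0 ≤ w j) (hw_sum : ∑ j ∈ Finset.range k, w j = 1)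
    {u : ℕ → E} (hu : ∀ i, u (i + k) = ∑ j ∈ Finset.range k, w j • u (i + j))
    (hinit : ∀ i < k, u i ∈ s) (i : ℕ) : u i ∈ s := by
  induction i using Nat.strong_induction_on with
  | _ i ih =>
    rcases lt_or_ge i k with hi | hi
    · exact hinit i hi
    · obtain ⟨r, rfl⟩ := Nat.exists_eq_add_of_le' hi
      rw [hu]
      refine hs.sum_mem (fun j hj => hw j (Finset.mem_range.1 hj)) hw_sum fun j hj => ih _ ?_
      have := Finset.mem_range.1 hj
      omega

/-- `α` is a root of the characteristic polynomial `Ψ_k(x) = x^k - x^(k-1) - ⋯ - x - 1` of the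
`k`-generalized Fibonacci recurrence; the equation is written without subtraction. -/
def IsKFibonacciRoot {R : Type*} [Semiring R] (k : ℕ) (α : R) : Prop :=
  α ^ k = ∑ i ∈ Finset.range k, α ^ i

namespace IsKFibonacciRoot

theorem pow_mul_two_sub {R : Type*} [CommRing R] {k : ℕ} {α : R} (h : IsKFibonacciRoot k α) :
    α ^ k * (2 - α) = 1 := by
  have hgeom := geom_sum_mul α k
  rw [← h] at hgeom
  linear_combination -hgeom

section Field

variable {K : Type*} [Field K] {k : ℕ} {α : K}

theorem inv_pow (h : IsKFibonacciRoot k α) : α⁻¹ ^ k = 2 - α := by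
  rw [_root_.inv_pow]
  exact inv_eq_of_mul_eq_one_right h.pow_mul_two_sub

theorem pos (h : IsKFibonacciRoot k α) : 0 < k := by
  rw [Nat.pos_iff_ne_zero]
  rintro rfl
  simp [IsKFibonacciRoot] at h

theorem ne_zero (h : IsKFibonacciRoot k α) : α ≠ 0 := by
  rintro rfl
  simpa [h.pos.ne'] using h.pow_mul_two_sub

theorem sum_inv_pow_succ (h : IsKFibonacciRoot k α) :
    ∑ j ∈ Finset.range k, α⁻¹ ^ (j + 1) = 1 := by
  have hα := h.ne_zero
  have hterm : ∀ j ∈ Finset.range k, α ^ k * α⁻¹ ^ (j + 1) = α ^ (k - 1 - j) := fun j hj => by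
    have hk : k = (k - 1 - j) + (j + 1) := by have := Finset.mem_range.1 hj; omega
    nth_rw 1 [hk]
    rw [pow_add, mul_assoc, ← mul_pow, mul_inv_cancel₀ hα, one_pow, mul_one]
  apply mul_left_cancel₀ (pow_ne_zero k hα)
  rw [Finset.mul_sum, Finset.sum_congr rfl hterm, Finset.sum_range_reflect (α ^ ·), mul_one, h]

theorem natCast_mul_two_sub_le_one [LinearOrder K] [IsStrictOrderedRing K]
    (h : IsKFibonacciRoot k α) (hα : 1 < α) :
    k * (2 - α) ≤ 1 := by
  have hk_le : (k : K) ≤ α ^ k := by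
    rw [h]
    simpa using Finset.card_nsmul_le_sum (Finset.range k) (α ^ ·) 1 fun i _ => one_le_pow₀ hα.le
  have htwo_sub : 0 ≤ 2 - α := by rw [← h.inv_pow]; positivity
  exact (mul_le_mul_of_nonneg_right hk_le htwo_sub).trans_eq h.pow_mul_two_sub

end Field

end IsKFibonacciRoot

section Recurrence

theorem eq_two_mul_sub_of_sum_recurrence {R : Type*} [CommRing R] {k : ℕ} {u : ℕ → R}
    (hu : ∀ i, u (i + k) = ∑ j ∈ Finset.range k, u (i + j)) (i : ℕ) :
    u (i + 1 + k) = 2 * u (i + k) - u i := by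
  have hlast := Finset.sum_range_succ (fun j => u (i + j)) k
  have hfirst := Finset.sum_range_succ' (fun j => u (i + j)) k
  have hshift : u (i + 1 + k) = ∑ j ∈ Finset.range k, u (i + (j + 1)) := by
    rw [hu]
    simp only [add_assoc, add_comm 1]
  rw [← hu] at hlast
  rw [← hshift, add_zero] at hfirst
  linear_combination hlast - hfirst

variable {K : Type*} [Field K] {k : ℕ} {α : K}

/-- The sequence obtained from `u` by applying `x^k - ∑ j < k, α^(-(j+1)) x^j` to the shift
operator. When `α` is a root of `Ψ_k` this polynomial is `(x - 1) Ψ_k(x) / (x - α)`, so that on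
solutions of the `k`-Fibonacci recurrence only the `α`-component survives. -/
def deflate (k : ℕ) (α : K) (u : ℕ → K) (i : ℕ) : K :=
  u (i + k) - ∑ j ∈ Finset.range k, α⁻¹ ^ (j + 1) * u (i + j)

theorem deflate_succ (hα : IsKFibonacciRoot k α) {u : ℕ → K}
    (hu : ∀ i, u (i + k) = ∑ j ∈ Finset.range k, u (i + j)) (i : ℕ) :
    deflate k α u (i + 1) = α * deflate k α u i := by
  have hlast := Finset.sum_range_succ (fun j => α⁻¹ ^ j * u (i + j)) k
  have hfirst := Finset.sum_range_succ' (fun j => α⁻¹ ^ j * u (i + j)) k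
  have hshift : ∑ j ∈ Finset.range k, α⁻¹ ^ (j + 1) * u (i + 1 + j)
      = ∑ j ∈ Finset.range k, α⁻¹ ^ (j + 1) * u (i + (j + 1)) := by
    simp only [add_assoc, add_comm 1]
  have hscale : α * ∑ j ∈ Finset.range k, α⁻¹ ^ (j + 1) * u (i + j)
      = ∑ j ∈ Finset.range k, α⁻¹ ^ j * u (i + j) := by
    simp only [Finset.mul_sum, pow_succ', mul_assoc, mul_inv_cancel_left₀ hα.ne_zero]
  rw [hα.inv_pow] at hlast
  rw [pow_zero, one_mul, add_zero] at hfirst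
  rw [deflate, deflate, mul_sub, hscale, hshift]
  linear_combination eq_two_mul_sub_of_sum_recurrence hu i + hfirst - hlast

theorem deflate_eq_pow_mul (hα : IsKFibonacciRoot k α) {u : ℕ → K}
    (hu : ∀ i, u (i + k) = ∑ j ∈ Finset.range k, u (i + j)) (i : ℕ) :
    deflate k α u i = α ^ i * deflate k α u 0 := by
  induction i with
  | zero => rw [pow_zero, one_mul]
  | succ i ih => rw [deflate_succ hα hu, ih, pow_succ', mul_assoc]

theorem mem_of_deflate_zero_eq_zero [LinearOrder K] [IsStrictOrderedRing K] {s : Set K}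
    (hs : Convex K s) (hα : IsKFibonacciRoot k α) (hα_pos : 0 < α) {u : ℕ → K}
    (hu : ∀ i, u (i + k) = ∑ j ∈ Finset.range k, u (i + j)) (hu0 : deflate k α u 0 = 0)
    (hinit : ∀ i < k, u i ∈ s) (i : ℕ) : u i ∈ s := by
  refine mem_of_convex_combination_recurrence hs (w := fun j => α⁻¹ ^ (j + 1))
    (fun j _ => by positivity) hα.sum_inv_pow_succ (fun r => ?_) hinit i
  exact sub_eq_zero.1 ((deflate_eq_pow_mul hα hu r).trans (by rw [hu0, mul_zero]))

end Recurrence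

/-- The value at `x` of `f_k(x) = (x - 1) / (2 + (k + 1) (x - 2))`, the coefficient of `α^(n-1)` in
the Binet formula of the `k`-generalized Fibonacci numbers. -/
noncomputable def binetCoeff (k : ℕ) (x : ℝ) : ℝ :=
  (x - 1) / (2 + ((k : ℝ) + 1) * (x - 2))

section BinetCoeff

variable {k : ℕ} {α : ℝ}

theorem IsKFibonacciRoot.sub_one_le_binetCoeff_denom (h : IsKFibonacciRoot k α) (hα : 1 < α) :
    α - 1 ≤ 2 + ((k : ℝ) + 1) * (α - 2) := by
  linarith [h.natCast_mul_two_sub_le_one hα]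

theorem IsKFibonacciRoot.binetCoeff_mul (h : IsKFibonacciRoot k α) (hα : 1 < α) :
    binetCoeff k α * (α - k * (2 - α)) = α - 1 := by
  have hdenom := h.sub_one_le_binetCoeff_denom hα
  rw [binetCoeff, show α - k * (2 - α) = 2 + ((k : ℝ) + 1) * (α - 2) by ring]
  exact div_mul_cancel₀ _ (by linarith)

theorem IsKFibonacciRoot.binetCoeff_nonneg (h : IsKFibonacciRoot k α) (hα : 1 < α) :
    0 ≤ binetCoeff k α :=
  div_nonneg (by linarith) (by linarith [h.sub_one_le_binetCoeff_denom hα])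

theorem IsKFibonacciRoot.binetCoeff_le_one (h : IsKFibonacciRoot k α) (hα : 1 < α) :
    binetCoeff k α ≤ 1 :=
  have hdenom := h.sub_one_le_binetCoeff_denom hα
  (div_le_one (by linarith)).2 hdenom

end BinetCoeff

/-- `F` is the `k`-generalized Fibonacci sequence `F^(k)`, constrained only at the indices
`n ≥ 2 - k`. -/
structure IsKFibonacci (k : ℕ) (F : ℤ → ℤ) : Prop where
  eq_zero : ∀ n : ℤ, 2 - (k : ℤ) ≤ n → n ≤ 0 → F n = 0
  one : F 1 = 1
  recurrence : ∀ n : ℤ, 2 ≤ n → F n = ∑ i ∈ Finset.range k, F (n - 1 - (i : ℤ))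

/-- The error `F_n - f_k(α) α^(n-1)` of the one-term Binet approximation, reindexed by
`n = i + 2 - k` so that it starts with the `k` initial values of `F^(k)`. -/
noncomputable def binetError (k : ℕ) (α : ℝ) (F : ℤ → ℤ) (i : ℕ) : ℝ :=
  F (i + 2 - k) - binetCoeff k α * α ^ ((i : ℤ) + 1 - k)

namespace IsKFibonacci

variable {k : ℕ} {F : ℤ → ℤ} {α : ℝ}

theorem two (hF : IsKFibonacci k F) (hk : 0 < k) : F 2 = 1 := by
  rw [hF.recurrence 2 le_rfl, Finset.sum_eq_single_of_mem 0 (Finset.mem_range.2 hk)]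
  · simpa using hF.one
  · intro j hj hj0
    have := Finset.mem_range.1 hj
    exact hF.eq_zero _ (by omega) (by omega)

theorem sum_recurrence (hF : IsKFibonacci k F) (i : ℕ) :
    F (((i + k : ℕ) : ℤ) + 2 - k) = ∑ j ∈ Finset.range k, F (((i + j : ℕ) : ℤ) + 2 - k) := by
  rw [hF.recurrence _ (by omega), ← Finset.sum_range_reflect]
  refine Finset.sum_congr rfl fun j hj => congrArg F ?_
  have := Finset.mem_range.1 hj
  omega

theorem binetError_add (hF : IsKFibonacci k F) (hroot : IsKFibonacciRoot k α) (i : ℕ) :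
    binetError k α F (i + k) = ∑ j ∈ Finset.range k, binetError k α F (i + j) := by
  have hpow (j : ℕ) : α ^ (((i + j : ℕ) : ℤ) + 1 - k) = α ^ ((i : ℤ) + 1 - k) * α ^ j := by
    rw [← zpow_natCast, ← zpow_add₀ hroot.ne_zero]
    congr 1
    push_cast
    ring
  have hpow_k : α ^ (((i + k : ℕ) : ℤ) + 1 - k)
      = ∑ j ∈ Finset.range k, α ^ (((i + j : ℕ) : ℤ) + 1 - k) := by
    simp only [hpow, ← Finset.mul_sum]
    rw [← hroot]
  simp only [binetError, Finset.sum_sub_distrib, ← Finset.mul_sum]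
  rw [hF.sum_recurrence, hpow_k, Int.cast_sum]

theorem sum_inv_pow_succ_mul (hF : IsKFibonacci k F) (hroot : IsKFibonacciRoot k α) :
    ∑ j ∈ Finset.range k, α⁻¹ ^ (j + 1) * (F ((j : ℤ) + 2 - k) : ℝ) = 2 - α := by
  have hk := hroot.pos
  rw [← hroot.inv_pow, Finset.sum_eq_single_of_mem (k - 1) (Finset.mem_range.2 (by omega))]
  · rw [show ((k - 1 : ℕ) : ℤ) + 2 - k = 1 by omega, hF.one, Int.cast_one, mul_one,
      Nat.sub_add_cancel hk]
  · intro j hj hj_ne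
    have := Finset.mem_range.1 hj
    rw [hF.eq_zero _ (by omega) (by omega), Int.cast_zero, mul_zero]

theorem deflate_binetError_zero (hF : IsKFibonacci k F) (hroot : IsKFibonacciRoot k α)
    (hα : 1 < α) : deflate k α (binetError k α F) 0 = 0 := by
  have hterm (j : ℕ) : α⁻¹ ^ (j + 1) * α ^ ((j : ℤ) + 1 - k) = 2 - α := by
    rw [← hroot.inv_pow, sub_eq_add_neg, zpow_add₀ hroot.ne_zero, zpow_neg, zpow_natCast,
      ← Nat.cast_succ, zpow_natCast, ← mul_assoc, ← mul_pow, inv_mul_cancel₀ hroot.ne_zero,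
      one_pow, one_mul, inv_pow]
  have hlead : binetError k α F k = 1 - binetCoeff k α * α := by
    rw [binetError, add_sub_cancel_left, add_sub_cancel_left, hF.two hroot.pos, Int.cast_one,
      zpow_one]
  have hsum : ∑ j ∈ Finset.range k, α⁻¹ ^ (j + 1) * binetError k α F j
      = 2 - α - binetCoeff k α * (k * (2 - α)) := by
    simp only [binetError, mul_sub, Finset.sum_sub_distrib, hF.sum_inv_pow_succ_mul hroot,
      mul_left_comm _ (binetCoeff k α), hterm, Finset.sum_const, Finset.card_range, nsmul_eq_mul]
  simp only [deflate, zero_add]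
  linear_combination hlead - hsum - hroot.binetCoeff_mul hα

theorem binetError_mem_Icc_of_lt (hF : IsKFibonacci k F) (hroot : IsKFibonacciRoot k α)
    (hα : 1 < α) {i : ℕ} (hi : i < k) : binetError k α F i ∈ Set.Icc (-1) 1 := by
  have hpow_le : α ^ ((i : ℤ) + 1 - k) ≤ 1 := zpow_le_one_of_nonpos₀ hα.le (by omega)
  have hpow_nonneg : 0 ≤ α ^ ((i : ℤ) + 1 - k) := by positivity
  have hmain_nonneg := mul_nonneg (hroot.binetCoeff_nonneg hα) hpow_nonneg
  have hmain_le := mul_le_one₀ (hroot.binetCoeff_le_one hα) hpow_nonneg hpow_le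
  have hF_values : F ((i : ℤ) + 2 - k) = 0 ∨ F ((i : ℤ) + 2 - k) = 1 := by
    rcases eq_or_lt_of_le (Nat.succ_le_of_lt hi) with hlast | hlt
    · right
      rw [← hF.one]
      congr 1
      omega
    · exact .inl (hF.eq_zero _ (by omega) (by omega))
  rw [binetError, Set.mem_Icc]
  rcases hF_values with hF_zero | hF_one
  · rw [hF_zero, Int.cast_zero]
    constructor <;> linarith
  · rw [hF_one, Int.cast_one]
    constructor <;> linarith

theorem abs_sub_binetCoeff_mul_zpow_le_one (hF : IsKFibonacci k F) (hroot : IsKFibonacciRoot k α)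
    (hα : 1 < α) {n : ℤ} (hn : 2 - (k : ℤ) ≤ n) :
    |F n - binetCoeff k α * α ^ (n - 1)| ≤ 1 := by
  obtain ⟨i, hi⟩ := Int.eq_ofNat_of_zero_le (sub_nonneg.2 hn)
  obtain rfl : n = i + 2 - k := by omega
  have hmem := mem_of_deflate_zero_eq_zero (convex_Icc (-1) 1) hroot (by linarith)
    (hF.binetError_add hroot) (hF.deflate_binetError_zero hroot hα)
    (fun _ => hF.binetError_mem_Icc_of_lt hroot hα) i
  rw [show (i : ℤ) + 2 - k - 1 = i + 1 - k by ring]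
  exact abs_le.2 hmem

end IsKFibonacci

/-- For digits `d₁, d₂ < b`, the integer whose base-`b` digits are `ℓ` copies of `d₁`, then `m`
copies of `d₂`, then `ℓ` copies of `d₁`. The divisions, by which repunits are written, are exact. -/
def repdigitPalindrome (b d₁ d₂ ℓ m : ℕ) : ℤ :=
  (d₁ : ℤ) * ((b ^ ℓ - 1) / (b - 1)) * b ^ (ℓ + m)
    + (d₂ : ℤ) * ((b ^ m - 1) / (b - 1)) * b ^ ℓ
    + (d₁ : ℤ) * ((b ^ ℓ - 1) / (b - 1))

section RepdigitPalindrome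

variable {b d₁ d₂ ℓ m : ℕ}

theorem sub_one_mul_repdigitPalindrome (b d₁ d₂ ℓ m : ℕ) :
    ((b : ℤ) - 1) * repdigitPalindrome b d₁ d₂ ℓ m
      = d₁ * b ^ (2 * ℓ + m) + (d₂ - d₁) * (b ^ ℓ * (b ^ m - 1)) - d₁ := by
  have hrepunit (r : ℕ) : ((b : ℤ) - 1) * ((b ^ r - 1) / (b - 1)) = b ^ r - 1 :=
    Int.mul_ediv_cancel' (sub_one_dvd_pow_sub_one _ r)
  rw [repdigitPalindrome]
  linear_combination (d₁ * b ^ (ℓ + m) + d₁ : ℤ) * hrepunit ℓ + (d₂ * b ^ ℓ : ℤ) * hrepunit m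

theorem abs_sub_one_mul_repdigitPalindrome_sub_le (hb : 2 ≤ b) (hd₁ : 0 < d₁) (hd₂ : d₂ < b) :
    |((b : ℤ) - 1) * repdigitPalindrome b d₁ d₂ ℓ m - d₁ * b ^ (2 * ℓ + m)|
      ≤ (b - 1) * (d₁ * b ^ (ℓ + m)) := by
  have hb_pos : (0 : ℤ) < b := by omega
  have hℓ_pow : (1 : ℤ) ≤ b ^ ℓ := one_le_pow₀ hb_pos
  have hm_pow : (1 : ℤ) ≤ b ^ m := one_le_pow₀ hb_pos
  have hblock : (0 : ℤ) ≤ b ^ ℓ * (b ^ m - 1) := mul_nonneg (by omega) (by omega)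
  have hd₂_nonneg : 0 ≤ d₂ * (b ^ ℓ * (b ^ m - 1) : ℤ) := mul_nonneg (by omega) hblock
  have hd₁_nonneg : 0 ≤ d₁ * (b ^ ℓ * (b ^ m - 1) : ℤ) := mul_nonneg (by omega) hblock
  have hd₂_le : d₂ * (b ^ ℓ * (b ^ m - 1) : ℤ) ≤ (b - 1) * (d₁ * b ^ (ℓ + m)) := by
    refine mul_le_mul (by omega) ?_ hblock (by omega)
    calc (b ^ ℓ * (b ^ m - 1) : ℤ) ≤ b ^ (ℓ + m) := by rw [pow_add]; linarith
      _ ≤ d₁ * b ^ (ℓ + m) := le_mul_of_one_le_left (by positivity) (by omega)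
  have hd₁_le : d₁ * (b ^ ℓ * (b ^ m - 1) : ℤ) + d₁ ≤ (b - 1) * (d₁ * b ^ (ℓ + m)) :=
    calc d₁ * (b ^ ℓ * (b ^ m - 1) : ℤ) + d₁
        ≤ d₁ * (b ^ ℓ * (b ^ m - 1)) + d₁ * b ^ ℓ := by
          gcongr
          exact le_mul_of_one_le_right (by omega) hℓ_pow
      _ = d₁ * b ^ (ℓ + m) := by ring
      _ ≤ (b - 1) * (d₁ * b ^ (ℓ + m)) := le_mul_of_one_le_left (by positivity) (by omega)
  rw [sub_one_mul_repdigitPalindrome, abs_le]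
  constructor <;> linarith

theorem abs_sub_one_mul_sub_le_of_abs_repdigitPalindrome_sub_le_one (hb : 2 ≤ b) (hd₁ : 0 < d₁)
    (hd₂ : d₂ < b) (hℓ : 1 ≤ ℓ) {x : ℝ} (hx : |repdigitPalindrome b d₁ d₂ ℓ m - x| ≤ 1) :
    |((b : ℝ) - 1) * x - d₁ * b ^ (2 * ℓ + m)| ≤ b * (d₁ * b ^ (ℓ + m)) := by
  have hb_gt : (1 : ℝ) < b := by exact_mod_cast hb
  have hd₁_ge : (1 : ℝ) ≤ d₁ := by exact_mod_cast hd₁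
  have hpalindrome : |((b : ℝ) - 1) * repdigitPalindrome b d₁ d₂ ℓ m - d₁ * b ^ (2 * ℓ + m)|
      ≤ (b - 1) * (d₁ * b ^ (ℓ + m)) := by
    exact_mod_cast abs_sub_one_mul_repdigitPalindrome_sub_le (ℓ := ℓ) (m := m) hb hd₁ hd₂
  have hx_scaled : |((b : ℝ) - 1) * x - (b - 1) * repdigitPalindrome b d₁ d₂ ℓ m| ≤ b - 1 := by
    rw [← mul_sub, abs_mul, abs_of_pos (by linarith), abs_sub_comm]
    exact mul_le_of_le_one_right (by linarith) hx
  have hb_le : (b : ℝ) ≤ d₁ * b ^ (ℓ + m) :=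
    (le_self_pow₀ hb_gt.le (by omega)).trans (le_mul_of_one_le_left (by positivity) hd₁_ge)
  linarith [abs_sub_le (((b : ℝ) - 1) * x) ((b - 1) * repdigitPalindrome b d₁ d₂ ℓ m)
    (d₁ * b ^ (2 * ℓ + m))]

theorem abs_div_mul_sub_one_le_of_abs_repdigitPalindrome_sub_le_one (hb : 2 ≤ b) (hd₁ : 0 < d₁)
    (hd₂ : d₂ < b) (hℓ : 1 ≤ ℓ) {x : ℝ} (hx : |repdigitPalindrome b d₁ d₂ ℓ m - x| ≤ 1) :
    |((b : ℝ) - 1) / d₁ * (b : ℝ) ^ (-(2 * (ℓ : ℤ) + m)) * x - 1| ≤ b * (b : ℝ) ^ (-(ℓ : ℤ)) := by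
  have hden : (0 : ℝ) < d₁ * b ^ (2 * ℓ + m) := by positivity
  have hzpow : (b : ℝ) ^ (-(2 * (ℓ : ℤ) + m)) = ((b : ℝ) ^ (2 * ℓ + m))⁻¹ := by
    rw [← zpow_natCast, ← zpow_neg]
    norm_cast
  calc |((b : ℝ) - 1) / d₁ * (b : ℝ) ^ (-(2 * (ℓ : ℤ) + m)) * x - 1|
      = |(((b : ℝ) - 1) * x - d₁ * b ^ (2 * ℓ + m)) / (d₁ * b ^ (2 * ℓ + m))| := by
        rw [hzpow, sub_div _ _ (d₁ * (b : ℝ) ^ (2 * ℓ + m)), div_self hden.ne', mul_div_right_comm,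
          div_mul_eq_div_div, ← div_eq_mul_inv]
    _ = |((b : ℝ) - 1) * x - d₁ * b ^ (2 * ℓ + m)| / (d₁ * b ^ (2 * ℓ + m)) := by
        rw [abs_div, abs_of_pos hden]
    _ ≤ b * (d₁ * b ^ (ℓ + m)) / (d₁ * b ^ (2 * ℓ + m)) := by
        gcongr
        exact abs_sub_one_mul_sub_le_of_abs_repdigitPalindrome_sub_le_one hb hd₁ hd₂ hℓ hx
    _ = b * (b : ℝ) ^ (-(ℓ : ℤ)) := by
        rw [zpow_neg, zpow_natCast]
        field_simp
        ring

end RepdigitPalindrome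

theorem Gamma1_small_general {k : ℕ} {F : ℤ → ℤ} (hF : IsKFibonacci k F)
    {α : ℝ} (hα : 1 < α) (hroot : IsKFibonacciRoot k α) {n : ℤ} (hn : 2 - (k : ℤ) ≤ n)
    {b d₁ d₂ ℓ m : ℕ} (hb : 2 ≤ b) (hd₁ : 0 < d₁) (hd₂ : d₂ < b) (hℓ : 1 ≤ ℓ)
    (heq : F n = repdigitPalindrome b d₁ d₂ ℓ m) :
    |((b : ℝ) - 1) / d₁ * (b : ℝ) ^ (-(2 * (ℓ : ℤ) + m)) * binetCoeff k α * α ^ (n - 1) - 1|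
      ≤ b * (b : ℝ) ^ (-(ℓ : ℤ)) := by
  have hbinet := hF.abs_sub_binetCoeff_mul_zpow_le_one hroot hα hn
  rw [heq] at hbinet
  rw [mul_assoc _ (binetCoeff k α)]
  exact abs_div_mul_sub_one_le_of_abs_repdigitPalindrome_sub_le_one hb hd₁ hd₂ hℓ hbinet

/-- Under the hypotheses of the main equation (k ≥ 2, n ≥ 9, n ≥ k + 1),
|(9/d1)·10^{−(2ℓ+m)}·f_k(α)·α^{n−1} − 1| < 11·10^{−ℓ}. -/
theorem Gamma1_small
    (k : ℕ) (hk : 2 ≤ k) (F : ℤ → ℤ)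
    (hF0 : ∀ n : ℤ, 2 - (k : ℤ) ≤ n → n ≤ 0 → F n = 0)
    (hF1 : F 1 = 1)
    (hFrec : ∀ n : ℤ, 2 ≤ n → F n = ∑ i ∈ Finset.range k, F (n - 1 - (i : ℤ)))
    (α : ℝ) (hα : 1 < α) (hroot : α ^ k = ∑ i ∈ Finset.range k, α ^ i)
    (n : ℤ) (hn : 9 ≤ n) (hnk : (k : ℤ) + 1 ≤ n)
    (d1 d2 : ℕ) (hd1 : d1 ≤ 9) (hd2 : d2 ≤ 9) (hd1pos : 0 < d1) (hne : d1 ≠ d2)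
    (ℓ m : ℕ) (hℓ : 1 ≤ ℓ) (hm : 1 ≤ m)
    (heq : F n = (d1 : ℤ) * ((10 ^ ℓ - 1) / 9) * 10 ^ (ℓ + m)
        + (d2 : ℤ) * ((10 ^ m - 1) / 9) * 10 ^ ℓ
        + (d1 : ℤ) * ((10 ^ ℓ - 1) / 9)) :
    |9 / (d1 : ℝ) * (10 : ℝ) ^ (-(2 * (ℓ : ℤ) + m))
        * ((α - 1) / (2 + ((k : ℝ) + 1) * (α - 2))) * α ^ (n - 1) - 1|
      < 11 * (10 : ℝ) ^ (-(ℓ : ℤ)) := by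
  have hbound := Gamma1_small_general ⟨hF0, hF1, hFrec⟩ hα hroot (by omega : 2 - (k : ℤ) ≤ n)
    (b := 10) (by norm_num) hd1pos (by omega : d2 < 10) hℓ heq
  rw [show ((10 : ℕ) : ℝ) - 1 = 9 by norm_num] at hbound
  exact hbound.trans_lt (by push_cast; gcongr; norm_num)
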